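/- Let P be a Markov kernel on a standard Borel space X and let u : X → [1,∞] be Borel with Pu ≤ a·u + b for some a ∈ (0,1) and b ∈ ℝ. Let p ∈ (1,∞), let ψ : ℕ → ℝ₊ be a nonincreasing function converging to 0 at infinity, and let f ∈ E_u^p. Then for every x ∈ X with u(x) < ∞, (1/n) ∑_{k=0}^{n−1} ψ(k) f(X_k) converges to 0 both ℙ_x-almost everywhere and in L^p(ℙ_x). -/

import Mathlib

open MeasureTheory ProbabilityTheory Filter Set
open scoped ENNReal NNReal

/-- The action of a Markov kernel on `[0,∞]`-valued functions: `Pf(x) = ∫ f(y) P(x,dy)`. -/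
noncomputable def kernelOp {X : Type*} [MeasurableSpace X] (P : ProbabilityTheory.Kernel X X)
    (f : X → ℝ≥0∞) : X → ℝ≥0∞ :=
  fun x => ∫⁻ y, f y ∂(P x)

/-- `f ∈ E_u^p` (with `C = X`) with `‖f‖_{E_u^p} ≤ M`: `f` is Borel and
`|f| ≤ M (u − Pu + b)^{1/p}`. -/
def MemDriftSpace {X : Type*} [MeasurableSpace X] (P : ProbabilityTheory.Kernel X X)
    (u : X → ℝ≥0∞) (b : ℝ≥0) (p : ℝ) (f : X → ℝ) (M : ℝ≥0) : Prop :=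
  Measurable f ∧ ∀ x, (‖f x‖₊ : ℝ≥0∞) ≤
    (M : ℝ≥0∞) * (u x - kernelOp P u x + (b : ℝ≥0∞)) ^ (1 / p)

/-- `μ` is the law `ℙ_x` on `X^ℕ` of the canonical Markov chain with kernel `P` started at `x`
(the Ionescu–Tulcea measure). -/
def IsCanonicalChain {X : Type*} [MeasurableSpace X] (P : ProbabilityTheory.Kernel X X)
    (x : X) (μ : Measure (ℕ → X)) : Prop :=
  IsProbabilityMeasure μ ∧
  μ.map (fun ω => ω 0) = Measure.dirac x ∧
  ∀ n : ℕ, ∀ g : X → ℝ≥0∞, Measurable g →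
    ∀ h : (ℕ → X) → ℝ≥0∞,
      Measurable[MeasurableSpace.comap (fun (ω : ℕ → X) (i : Fin (n + 1)) => ω i)
        MeasurableSpace.pi] h →
      ∫⁻ ω, h ω * g (ω (n + 1)) ∂μ = ∫⁻ ω, h ω * kernelOp P g (ω n) ∂μ

/-!
Write `w = u + b + 1` and `q = min p 2`, so that `|f|` is dominated by a multiple of
`v = w ^ (1 / q)`. By Jensen's inequality `v` satisfies a drift inequality too. The sums of
`v (X_{k+1}) - Pv (X_k)`, reflected at `0` so that they never become negative, satisfy a one-sided
von Bahr-Esseen inequality: since `1 < q ≤ 2`, their `q`-th moments grow at most linearly. By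
Markov's inequality and the Borel-Cantelli lemma, they are almost surely at most `n` along
`n = 2 ^ j`, for large `j`. The drift inequality for `v` turns this into `∑_{k<n} v (X_k) = O(n)`
almost surely, and multiplying the terms by `ψ k → 0` improves `O(n)` to `o(n)`. In `L^p`, the
drift inequality bounds `‖f (X_k)‖` uniformly in `k`, and the averages of `|ψ|` tend to `0`.
-/

section PowerInequality

variable {q : ℝ}

lemma abs_rpow_sub_rpow_le {w y r : ℝ} (hw : 0 ≤ w) (hy : 0 ≤ y) (hr0 : 0 ≤ r) (hr1 : r ≤ 1) :
    |w ^ r - y ^ r| ≤ |w - y| ^ r := by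
  wlog hyw : y ≤ w generalizing w y
  · rw [abs_sub_comm, abs_sub_comm w]
    exact this hy hw (le_of_not_ge hyw)
  rw [abs_of_nonneg (sub_nonneg.2 (Real.rpow_le_rpow hy hyw hr0)), abs_of_nonneg (sub_nonneg.2 hyw)]
  have := Real.rpow_add_le_add_rpow (sub_nonneg.2 hyw) hy hr0 hr1
  rw [sub_add_cancel] at this
  linarith

lemma rpow_add_mul_sub_le_rpow {w y : ℝ} (hw : 0 ≤ w) (hy : 0 ≤ y) (hq : 1 < q) :
    w ^ q + q * w ^ (q - 1) * (y - w) ≤ y ^ q := by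
  obtain rfl | hw := hw.eq_or_lt
  · rw [Real.zero_rpow (by linarith), Real.zero_rpow (by linarith)]
    simpa using Real.rpow_nonneg hy q
  have bernoulli : 1 + q * (y / w - 1) ≤ (y / w) ^ q := by
    have := one_add_mul_self_le_rpow_one_add (s := y / w - 1)
      (by linarith [div_nonneg hy hw.le]) hq.le
    rwa [add_sub_cancel] at this
  calc w ^ q + q * w ^ (q - 1) * (y - w) = w ^ q * (1 + q * (y / w - 1)) := by
        rw [Real.rpow_sub_one hw.ne']
        field_simp
    _ ≤ w ^ q * (y / w) ^ q := by gcongr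
    _ = y ^ q := by rw [← Real.mul_rpow hw.le (by positivity), mul_div_cancel₀ _ hw.ne']

lemma rpow_le_rpow_add_mul_sub_add {w y : ℝ} (hw : 0 ≤ w) (hy : 0 ≤ y) (hq : 1 < q) (hq2 : q ≤ 2) :
    w ^ q ≤ y ^ q + q * y ^ (q - 1) * (w - y) + q * |w - y| ^ q := by
  have slope_diff : (w ^ (q - 1) - y ^ (q - 1)) * (w - y) ≤ |w - y| ^ q := by
    calc (w ^ (q - 1) - y ^ (q - 1)) * (w - y)
        ≤ |w ^ (q - 1) - y ^ (q - 1)| * |w - y| := by rw [← abs_mul]; exact le_abs_self _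
      _ ≤ |w - y| ^ (q - 1) * |w - y| := by
          gcongr
          exact abs_rpow_sub_rpow_le hw hy (by linarith) (by linarith)
      _ = |w - y| ^ q := by
          rw [← Real.rpow_add_one' (abs_nonneg _) (by linarith), sub_add_cancel]
  have tangent := rpow_add_mul_sub_le_rpow hw hy hq
  linarith [mul_le_mul_of_nonneg_left slope_diff (by linarith : 0 ≤ q)]

lemma max_rpow_le {y t : ℝ} (hy : 0 ≤ y) (hq : 1 < q) (hq2 : q ≤ 2) :
    max (y + t) 0 ^ q ≤ y ^ q + q * y ^ (q - 1) * t + q * |t| ^ q := by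
  rcases le_total 0 (y + t) with h | h
  · rw [max_eq_left h]
    simpa using rpow_le_rpow_add_mul_sub_add h hy hq hq2
  rw [max_eq_right h, Real.zero_rpow (by linarith)]
  have hle : y ^ (q - 1) * -t ≤ |t| ^ q := by
    calc y ^ (q - 1) * -t ≤ |t| ^ (q - 1) * |t| := by
          gcongr
          · linarith
          · rw [abs_of_nonpos] <;> linarith
          · exact neg_le_abs t
      _ = |t| ^ q := by
          rw [← Real.rpow_add_one' (abs_nonneg _) (by linarith), sub_add_cancel]
  linarith [mul_le_mul_of_nonneg_left hle (by linarith : 0 ≤ q), Real.rpow_nonneg hy q]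

lemma abs_sub_rpow_le_rpow_add_rpow {z c : ℝ} (hz : 0 ≤ z) (hc : 0 ≤ c) (hq : 0 ≤ q) :
    |z - c| ^ q ≤ z ^ q + c ^ q := by
  have hmax : |z - c| ≤ max z c :=
    abs_sub_le_iff.2 ⟨(sub_le_self z hc).trans (le_max_left z c),
      (sub_le_self c hz).trans (le_max_right z c)⟩
  refine (Real.rpow_le_rpow (abs_nonneg _) hmax hq).trans ?_
  rcases max_choice z c with h | h <;> rw [h]
  · exact le_add_of_nonneg_right (by positivity)
  · exact le_add_of_nonneg_left (by positivity)

-- `max_rpow_le` for `t = z - c`, with the negative part of the linear term moved to the left,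
-- as subtraction in `ℝ≥0∞` is truncated.
lemma add_tsub_rpow_add_le (y z c : ℝ≥0∞) (hq : 1 < q) (hq2 : q ≤ 2) :
    (y + z - c) ^ q + ENNReal.ofReal q * (y ^ (q - 1) * c) ≤
      y ^ q + ENNReal.ofReal q * (y ^ (q - 1) * z) + ENNReal.ofReal q * (z ^ q + c ^ q) := by
  have hq0 : 0 < q := by linarith
  rcases eq_or_ne y ∞ with rfl | hy
  · simp [hq0]
  rcases eq_or_ne z ∞ with rfl | hz
  · simp [hq0]
  rcases eq_or_ne c ∞ with rfl | hc
  · simp [hq0]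
  lift y to ℝ≥0 using hy
  lift z to ℝ≥0 using hz
  lift c to ℝ≥0 using hc
  lift q to ℝ≥0 using hq0.le
  rw [ENNReal.ofReal_coe_nnreal]
  have hq0' : (0 : ℝ) ≤ q - 1 := by linarith
  simp only [← ENNReal.coe_add, ← ENNReal.coe_sub, ← ENNReal.coe_rpow_of_nonneg _ hq0.le,
    ← ENNReal.coe_rpow_of_nonneg _ hq0', ← ENNReal.coe_mul, ENNReal.coe_le_coe]
  rw [← NNReal.coe_le_coe]
  push_cast [NNReal.coe_sub_def]
  have habs := abs_sub_rpow_le_rpow_add_rpow z.coe_nonneg c.coe_nonneg hq0.le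
  have := max_rpow_le (t := (z : ℝ) - c) y.coe_nonneg hq hq2
  rw [add_sub_assoc]
  linarith [mul_le_mul_of_nonneg_left habs hq0.le]

lemma rpow_sub_one_mul_le (y c : ℝ≥0∞) (hq : 1 < q) : y ^ (q - 1) * c ≤ y ^ q + c ^ q := by
  calc y ^ (q - 1) * c ≤ max y c ^ (q - 1) * max y c :=
        mul_le_mul' (ENNReal.rpow_le_rpow (le_max_left _ _) (by linarith)) (le_max_right _ _)
    _ = max y c ^ q := by
        conv_lhs => rw [← ENNReal.rpow_one (max y c), ← ENNReal.rpow_mul, one_mul]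
        rw [← ENNReal.rpow_add_of_nonneg _ _ (by linarith) zero_le_one, sub_add_cancel]
    _ ≤ y ^ q + c ^ q := by
        rcases max_choice y c with h | h <;> rw [h]
        exacts [le_self_add, le_add_self]

end PowerInequality

/-- The sums of the increments `z k - c k` reflected at `0`, as in Lindley's recursion. Reflection
keeps all quantities in `[0, ∞]`, so that no integrability has to be checked. -/
noncomputable def reflectedSum {Ω : Type*} (z c : ℕ → Ω → ℝ≥0∞) : ℕ → Ω → ℝ≥0∞
  | 0 => 0
  | n + 1 => fun ω => reflectedSum z c n ω + z n ω - c n ω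

section ReflectedSum

variable {Ω : Type*} {z c : ℕ → Ω → ℝ≥0∞}

lemma sum_le_reflectedSum_add_sum (z c : ℕ → Ω → ℝ≥0∞) (n : ℕ) (ω : Ω) :
    ∑ k ∈ Finset.range n, z k ω ≤ reflectedSum z c n ω + ∑ k ∈ Finset.range n, c k ω := by
  induction n with
  | zero => simp
  | succ n ih =>
    rw [Finset.sum_range_succ, Finset.sum_range_succ]
    calc ∑ k ∈ Finset.range n, z k ω + z n ω
        ≤ reflectedSum z c n ω + ∑ k ∈ Finset.range n, c k ω + z n ω := by gcongr
      _ = reflectedSum z c n ω + z n ω + ∑ k ∈ Finset.range n, c k ω := add_right_comm _ _ _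
      _ ≤ reflectedSum z c n ω + z n ω - c n ω + c n ω + ∑ k ∈ Finset.range n, c k ω := by
          gcongr ?_ + _
          exact le_tsub_add
      _ = reflectedSum z c (n + 1) ω + (∑ k ∈ Finset.range n, c k ω + c n ω) := by
          rw [reflectedSum, add_assoc, add_comm (c n ω)]

variable {m : MeasurableSpace Ω} {μ : Measure Ω} {q : ℝ}

lemma measurable_reflectedSum {ℱ : Filtration ℕ m} (hz : ∀ n, Measurable[ℱ (n + 1)] (z n))
    (hc : ∀ n, Measurable[ℱ n] (c n)) (n : ℕ) : Measurable[ℱ n] (reflectedSum z c n) := by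
  induction n with
  | zero => exact measurable_const
  | succ n ih =>
    have hle : ℱ n ≤ ℱ (n + 1) := ℱ.mono n.le_succ
    exact ((ih.mono hle le_rfl).add (hz n)).sub ((hc n).mono hle le_rfl)

lemma lintegral_add_tsub_rpow_le {y z c : Ω → ℝ≥0∞} (hy : Measurable y) (hz : Measurable z)
    (hc : Measurable c) (hq : 1 < q) (hq2 : q ≤ 2)
    (hyzc : ∫⁻ ω, y ω ^ (q - 1) * z ω ∂μ ≤ ∫⁻ ω, y ω ^ (q - 1) * c ω ∂μ) :
    ∫⁻ ω, (y ω + z ω - c ω) ^ q ∂μ ≤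
      ∫⁻ ω, y ω ^ q ∂μ + ENNReal.ofReal q * (∫⁻ ω, z ω ^ q ∂μ + ∫⁻ ω, c ω ^ q ∂μ) := by
  set A := ∫⁻ ω, y ω ^ q ∂μ
  set B := ∫⁻ ω, c ω ^ q ∂μ
  have hq0 : 0 < ENNReal.ofReal q := ENNReal.ofReal_pos.2 (by linarith)
  by_cases hfin : A = ∞ ∨ B = ∞
  · rcases hfin with h | h <;> simp [h, hq0.ne']
  obtain ⟨hA, hB⟩ := not_or.1 hfin
  have hzc : Measurable fun ω => z ω ^ q + c ω ^ q := (hz.pow_const q).add (hc.pow_const q)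
  have hyz : Measurable fun ω => y ω ^ (q - 1) * z ω := (hy.pow_const _).mul hz
  have hyc : Measurable fun ω => y ω ^ (q - 1) * c ω := (hy.pow_const _).mul hc
  have hcross : ∫⁻ ω, y ω ^ (q - 1) * c ω ∂μ ≠ ∞ := by
    refine ne_top_of_le_ne_top (ENNReal.add_ne_top.2 ⟨hA, hB⟩) ?_
    rw [← lintegral_add_left (hy.pow_const q)]
    exact lintegral_mono fun ω => rpow_sub_one_mul_le _ _ hq
  have hcancel : ENNReal.ofReal q * ∫⁻ ω, y ω ^ (q - 1) * c ω ∂μ ≠ ∞ :=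
    ENNReal.mul_ne_top ENNReal.ofReal_ne_top hcross
  refine (ENNReal.add_le_add_iff_right hcancel).1 ?_
  calc ∫⁻ ω, (y ω + z ω - c ω) ^ q ∂μ + ENNReal.ofReal q * ∫⁻ ω, y ω ^ (q - 1) * c ω ∂μ
      = ∫⁻ ω, ((y ω + z ω - c ω) ^ q + ENNReal.ofReal q * (y ω ^ (q - 1) * c ω)) ∂μ := by
        rw [lintegral_add_right _ (hyc.const_mul _), lintegral_const_mul _ hyc]
    _ ≤ ∫⁻ ω, (y ω ^ q + ENNReal.ofReal q * (y ω ^ (q - 1) * z ω) +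
          ENNReal.ofReal q * (z ω ^ q + c ω ^ q)) ∂μ :=
        lintegral_mono fun ω => add_tsub_rpow_add_le _ _ _ hq hq2
    _ = A + ENNReal.ofReal q * ∫⁻ ω, y ω ^ (q - 1) * z ω ∂μ +
          ENNReal.ofReal q * (∫⁻ ω, z ω ^ q ∂μ + B) := by
        rw [lintegral_add_right _ (hzc.const_mul _), lintegral_add_left (hy.pow_const q),
          lintegral_const_mul _ hyz, lintegral_const_mul _ hzc,
          lintegral_add_left (hz.pow_const q)]
    _ ≤ A + ENNReal.ofReal q * ∫⁻ ω, y ω ^ (q - 1) * c ω ∂μ +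
          ENNReal.ofReal q * (∫⁻ ω, z ω ^ q ∂μ + B) := by gcongr
    _ = A + ENNReal.ofReal q * (∫⁻ ω, z ω ^ q ∂μ + B) +
          ENNReal.ofReal q * ∫⁻ ω, y ω ^ (q - 1) * c ω ∂μ := add_right_comm _ _ _

lemma lintegral_reflectedSum_rpow_le {ℱ : Filtration ℕ m} {K : ℝ≥0∞} (hq : 1 < q) (hq2 : q ≤ 2)
    (hz : ∀ n, Measurable[ℱ (n + 1)] (z n)) (hc : ∀ n, Measurable[ℱ n] (c n))
    (hzc : ∀ n (h : Ω → ℝ≥0∞), Measurable[ℱ n] h →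
      ∫⁻ ω, h ω * z n ω ∂μ ≤ ∫⁻ ω, h ω * c n ω ∂μ)
    (hzK : ∀ n, ∫⁻ ω, z n ω ^ q ∂μ ≤ K) (hcK : ∀ n, ∫⁻ ω, c n ω ^ q ∂μ ≤ K) (n : ℕ) :
    ∫⁻ ω, reflectedSum z c n ω ^ q ∂μ ≤ n * (ENNReal.ofReal q * (K + K)) := by
  induction n with
  | zero => simp [reflectedSum, show 0 < q by linarith]
  | succ n ih =>
    have hY := measurable_reflectedSum hz hc n
    calc ∫⁻ ω, reflectedSum z c (n + 1) ω ^ q ∂μ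
        ≤ ∫⁻ ω, reflectedSum z c n ω ^ q ∂μ +
            ENNReal.ofReal q * (∫⁻ ω, z n ω ^ q ∂μ + ∫⁻ ω, c n ω ^ q ∂μ) :=
          lintegral_add_tsub_rpow_le (hY.mono (ℱ.le _) le_rfl) ((hz n).mono (ℱ.le _) le_rfl)
            ((hc n).mono (ℱ.le _) le_rfl) hq hq2 (hzc n _ (hY.pow_const _))
      _ ≤ n * (ENNReal.ofReal q * (K + K)) + ENNReal.ofReal q * (K + K) := by
          gcongr
          exacts [hzK n, hcK n]
      _ = (n + 1 : ℕ) * (ENNReal.ofReal q * (K + K)) := by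
          rw [Nat.cast_succ, add_mul, one_mul]

end ReflectedSum

lemma ae_eventually_le_two_pow {Ω : Type*} {m : MeasurableSpace Ω} {μ : Measure Ω}
    {Y : ℕ → Ω → ℝ≥0∞} (hY : ∀ n, AEMeasurable (Y n) μ) {q : ℝ} (hq : 1 < q) {C : ℝ≥0∞}
    (hC : C ≠ ∞) (hYC : ∀ n : ℕ, ∫⁻ ω, Y n ω ^ q ∂μ ≤ n * C) :
    ∀ᵐ ω ∂μ, ∀ᶠ j : ℕ in atTop, Y (2 ^ j) ω ≤ 2 ^ j := by
  set r : ℝ≥0∞ := 2 ^ (1 - q)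
  have hr : r < 1 := ENNReal.rpow_lt_one_of_one_lt_of_neg (by norm_num) (by linarith)
  have hprob : ∀ j : ℕ, μ {ω | (2 ^ j : ℝ≥0∞) < Y (2 ^ j) ω} ≤ C * r ^ j := fun j => by
    have hpow : r ^ j = 2 ^ j * ((2 ^ j) ^ q)⁻¹ := by
      rw [← ENNReal.rpow_natCast r, ← ENNReal.rpow_mul, mul_comm (1 - q), ENNReal.rpow_mul,
        ENNReal.rpow_natCast, ENNReal.rpow_sub _ _ (by simp) (by simp), ENNReal.rpow_one,
        div_eq_mul_inv]
    calc μ {ω | (2 ^ j : ℝ≥0∞) < Y (2 ^ j) ω}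
        ≤ μ {ω | (2 ^ j : ℝ≥0∞) ^ q ≤ Y (2 ^ j) ω ^ q} :=
          measure_mono fun ω (hω : _ < _) => ENNReal.rpow_le_rpow hω.le (by linarith)
      _ ≤ (∫⁻ ω, Y (2 ^ j) ω ^ q ∂μ) / (2 ^ j) ^ q :=
          meas_ge_le_lintegral_div ((hY _).pow_const q) (by simp) (by simp)
      _ ≤ (2 ^ j : ℕ) * C / (2 ^ j) ^ q := by gcongr; exact hYC _
      _ = C * r ^ j := by
          rw [hpow, div_eq_mul_inv, Nat.cast_pow, Nat.cast_ofNat]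
          ring
  have hsum : ∑' j, μ {ω | (2 ^ j : ℝ≥0∞) < Y (2 ^ j) ω} ≠ ∞ := by
    refine ne_top_of_le_ne_top ?_ (ENNReal.tsum_le_tsum hprob)
    rw [ENNReal.tsum_mul_left]
    exact ENNReal.mul_ne_top hC (tsum_geometric_lt_top.2 hr).ne
  filter_upwards [ae_eventually_notMem hsum] with ω hω
  filter_upwards [hω] with j hj using not_lt.1 hj

section LinearGrowth

lemma sum_range_le_of_drift {s : ℕ → ℝ≥0∞} (hs : ∀ k, s k ≠ ∞) {α β : ℝ≥0} (hα : α < 1) {n : ℕ}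
    (h0 : s 0 ≤ n)
    (hsucc : ∑ k ∈ Finset.range n, s (k + 1) ≤ n + ∑ k ∈ Finset.range n, (α * s k + β)) :
    ∑ k ∈ Finset.range n, s k ≤ ((2 + β) / (1 - α) : ℝ≥0) * n := by
  set S := ∑ k ∈ Finset.range n, s k
  have hSfin : S ≠ ∞ := ENNReal.sum_ne_top.2 fun k _ => hs k
  have hα0 : 1 - α ≠ 0 := (tsub_pos_of_lt hα).ne'
  have hself : S ≤ α * S + (2 + β) * n := by
    calc S ≤ ∑ k ∈ Finset.range (n + 1), s k := by
          rw [Finset.sum_range_succ]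
          exact le_self_add
      _ = ∑ k ∈ Finset.range n, s (k + 1) + s 0 := Finset.sum_range_succ' _ _
      _ ≤ n + ∑ k ∈ Finset.range n, (α * s k + β) + n := by gcongr
      _ = α * S + (2 + β) * n := by
          rw [Finset.sum_add_distrib, ← Finset.mul_sum, Finset.sum_const, Finset.card_range,
            nsmul_eq_mul]
          ring
  have hsub : (1 - α : ℝ≥0) * S ≤ (2 + β) * n := by
    rw [ENNReal.coe_sub, ENNReal.sub_mul fun _ _ => hSfin, ENNReal.coe_one, one_mul]
    exact tsub_le_iff_left.2 hself
  rw [ENNReal.coe_div hα0, ENNReal.mul_comm_div, ← mul_div_assoc]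
  refine (ENNReal.le_div_iff_mul_le (Or.inl (ENNReal.coe_ne_zero.2 hα0))
    (Or.inl ENNReal.coe_ne_top)).2 ?_
  rw [mul_comm S]
  exact_mod_cast hsub

lemma eventually_le_mul_natCast_of_two_pow {S : ℕ → ℝ≥0∞} (hS : Monotone S) {L : ℝ≥0∞}
    (h : ∀ᶠ j : ℕ in atTop, S (2 ^ j) ≤ L * (2 ^ j : ℕ)) :
    ∀ᶠ n : ℕ in atTop, S n ≤ L * 2 * n := by
  obtain ⟨j₀, hj₀⟩ := eventually_atTop.1 h
  filter_upwards [eventually_ge_atTop (2 ^ j₀)] with n hn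
  have hn0 : n ≠ 0 := ((Nat.two_pow_pos j₀).trans_le hn).ne'
  have hlog : j₀ ≤ Nat.log 2 n := (Nat.le_log_iff_pow_le one_lt_two hn0).2 hn
  calc S n ≤ S (2 ^ (Nat.log 2 n + 1)) := hS (Nat.lt_pow_succ_log_self one_lt_two n).le
    _ ≤ L * (2 ^ (Nat.log 2 n + 1) : ℕ) := hj₀ _ (by omega)
    _ = L * 2 * (2 ^ Nat.log 2 n : ℕ) := by push_cast; ring
    _ ≤ L * 2 * n := by
        gcongr
        exact Nat.pow_log_le_self 2 hn0

end LinearGrowth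

section WeightedAverage

variable {E : Type*} [NormedAddCommGroup E] [NormedSpace ℝ E] {ψ : ℕ → ℝ}

lemma tendsto_weighted_average_zero (hψ : Tendsto ψ atTop (nhds 0)) {F : ℕ → E} {L : ℝ≥0}
    (hF : ∀ᶠ n : ℕ in atTop, ∑ k ∈ Finset.range n, ‖F k‖ₑ ≤ L * n) :
    Tendsto (fun n : ℕ => (n : ℝ)⁻¹ • ∑ k ∈ Finset.range n, ψ k • F k) atTop (nhds 0) := by
  have hterm : (fun k => ψ k • F k) =o[atTop] fun k => ‖F k‖ + 1 := by
    have hF1 : F =O[atTop] fun k => ‖F k‖ + 1 := Asymptotics.IsBigO.of_norm_le fun k => by simp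
    simpa using ((Asymptotics.isLittleO_one_iff ℝ).2 hψ).smul_isBigO hF1
  have hdiv : Tendsto (fun n => ∑ k ∈ Finset.range n, (‖F k‖ + 1)) atTop atTop := by
    refine tendsto_atTop_mono (fun n => ?_) tendsto_natCast_atTop_atTop
    rw [Finset.sum_add_distrib]
    simpa using Finset.sum_nonneg fun k _ => norm_nonneg (F k)
  have hlin : (fun n => ∑ k ∈ Finset.range n, (‖F k‖ + 1)) =O[atTop] fun n => (n : ℝ) := by
    refine Asymptotics.IsBigO.of_bound (L + 1) ?_
    filter_upwards [hF] with n hn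
    have hsum : ∑ k ∈ Finset.range n, ‖F k‖ ≤ L * n := by
      have : ∑ k ∈ Finset.range n, ‖F k‖₊ ≤ L * n := by
        simp only [enorm_eq_nnnorm] at hn
        exact_mod_cast hn
      simpa using NNReal.coe_le_coe.2 this
    rw [Real.norm_of_nonneg (by positivity), Real.norm_of_nonneg (by positivity),
      Finset.sum_add_distrib, add_mul]
    simpa using hsum
  have hlittle := (hterm.sum_range (fun k => by positivity) hdiv).trans_isBigO hlin
  exact hlittle.tendsto_inv_smul_nhds_zero

lemma tendsto_eLpNorm_weighted_average_zero {Ω : Type*} {m : MeasurableSpace Ω} {μ : Measure Ω}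
    (hψ : Tendsto ψ atTop (nhds 0)) {p : ℝ≥0∞} (hp : 1 ≤ p) {F : ℕ → Ω → E}
    (hF : ∀ k, AEStronglyMeasurable (F k) μ) {C : ℝ≥0∞} (hC : C ≠ ∞)
    (hFC : ∀ k, eLpNorm (F k) p μ ≤ C) :
    Tendsto (fun n : ℕ => eLpNorm
      (fun ω => (n : ℝ)⁻¹ • ∑ k ∈ Finset.range n, ψ k • F k ω) p μ) atTop (nhds 0) := by
  have hbound : ∀ n : ℕ, eLpNorm
      (fun ω => (n : ℝ)⁻¹ • ∑ k ∈ Finset.range n, ψ k • F k ω) p μ ≤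
        ENNReal.ofReal ((n : ℝ)⁻¹ * ∑ k ∈ Finset.range n, |ψ k|) * C := fun n => by
    calc eLpNorm (fun ω => (n : ℝ)⁻¹ • ∑ k ∈ Finset.range n, ψ k • F k ω) p μ
        = eLpNorm ((n : ℝ)⁻¹ • ∑ k ∈ Finset.range n, ψ k • F k) p μ := by
          congr 1
          ext ω
          simp
      _ = ‖(n : ℝ)⁻¹‖ₑ * eLpNorm (∑ k ∈ Finset.range n, ψ k • F k) p μ := eLpNorm_const_smul ..
      _ ≤ ‖(n : ℝ)⁻¹‖ₑ * ∑ k ∈ Finset.range n, eLpNorm (ψ k • F k) p μ := by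
          gcongr
          exact eLpNorm_sum_le (fun k _ => (hF k).const_smul _) hp
      _ ≤ ‖(n : ℝ)⁻¹‖ₑ * ∑ k ∈ Finset.range n, ‖ψ k‖ₑ * C := by
          gcongr with k
          rw [eLpNorm_const_smul]
          gcongr
          exact hFC k
      _ = ENNReal.ofReal ((n : ℝ)⁻¹ * ∑ k ∈ Finset.range n, |ψ k|) * C := by
          rw [← Finset.sum_mul, ← mul_assoc, ENNReal.ofReal_mul (by positivity),
            ENNReal.ofReal_sum_of_nonneg fun k _ => abs_nonneg _,
            Real.enorm_of_nonneg (by positivity)]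
          simp only [Real.enorm_eq_ofReal_abs]
  have hcesaro : Tendsto (fun n : ℕ => (n : ℝ)⁻¹ * ∑ k ∈ Finset.range n, |ψ k|) atTop (nhds 0) :=
    (tendsto_zero_iff_abs_tendsto_zero ψ |>.1 hψ).cesaro
  refine tendsto_of_tendsto_of_tendsto_of_le_of_le tendsto_const_nhds ?_ (fun n => zero_le) hbound
  simpa using ENNReal.Tendsto.mul_const (b := C) (ENNReal.tendsto_ofReal hcesaro) (Or.inr hC)

end WeightedAverage

section Kernel

variable {X : Type*} [MeasurableSpace X] {P : Kernel X X} {u g : X → ℝ≥0∞} {a b : ℝ≥0} {x : X}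

lemma measurable_kernelOp (hg : Measurable g) : Measurable (kernelOp P g) := hg.lintegral_kernel

lemma kernelOp_rpow_le [IsMarkovKernel P] (hu : Measurable u) {r : ℝ} (hr0 : 0 < r) (hr1 : r ≤ 1)
    (x : X) : kernelOp P (fun y => u y ^ r) x ≤ kernelOp P u x ^ r := by
  have h := eLpNorm'_le_eLpNorm'_of_exponent_le (f := u) hr0 hr1 (P x) hu.aestronglyMeasurable
  simp only [eLpNorm', enorm_eq_self, ENNReal.rpow_one, div_one] at h
  exact (ENNReal.rpow_inv_le_iff hr0).1 (by rwa [one_div] at h)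

lemma kernelOp_rpow_le_of_drift [IsMarkovKernel P] (hu : Measurable u) {r : ℝ} (hr0 : 0 < r)
    (hr1 : r ≤ 1) (hdrift : kernelOp P u x ≤ a * u x + b) :
    kernelOp P (fun y => u y ^ r) x ≤ (a ^ r : ℝ≥0) * u x ^ r + (b ^ r : ℝ≥0) := by
  calc kernelOp P (fun y => u y ^ r) x ≤ kernelOp P u x ^ r := kernelOp_rpow_le hu hr0 hr1 x
    _ ≤ (a * u x + b) ^ r := ENNReal.rpow_le_rpow hdrift hr0.le
    _ ≤ (a * u x) ^ r + (b : ℝ≥0∞) ^ r := ENNReal.rpow_add_le_add_rpow _ _ hr0.le hr1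
    _ = (a ^ r : ℝ≥0) * u x ^ r + (b ^ r : ℝ≥0) := by
        rw [ENNReal.mul_rpow_of_nonneg _ _ hr0.le, ENNReal.coe_rpow_of_nonneg _ hr0.le,
          ENNReal.coe_rpow_of_nonneg _ hr0.le]

lemma kernelOp_add_const_le [IsMarkovKernel P] (hdrift : kernelOp P u x ≤ a * u x + b)
    (d : ℝ≥0) : kernelOp P (fun y => u y + d) x ≤ a * (u x + d) + (b + d : ℝ≥0) := by
  calc kernelOp P (fun y => u y + d) x = kernelOp P u x + d := by
        simp [kernelOp, lintegral_add_right]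
    _ ≤ a * u x + b + d := by gcongr
    _ ≤ a * (u x + d) + (b + d : ℝ≥0) := by
        rw [ENNReal.coe_add, ← add_assoc]
        gcongr
        exact le_self_add

end Kernel

lemma MemDriftSpace.enorm_le {X : Type*} [MeasurableSpace X] {P : Kernel X X} {u : X → ℝ≥0∞}
    {b : ℝ≥0} {p q : ℝ} {f : X → ℝ} {M : ℝ≥0} (hf : MemDriftSpace P u b p f M) (hq : 0 < q)
    (hqp : q ≤ p) (x : X) : ‖f x‖ₑ ≤ M * (u x + (b + 1 : ℝ≥0)) ^ (1 / q) := by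
  have hp : 0 < p := hq.trans_le hqp
  have hbase : u x - kernelOp P u x + b ≤ u x + (b + 1 : ℝ≥0) := by
    gcongr
    exacts [tsub_le_self, le_self_add]
  have hone : (1 : ℝ≥0∞) ≤ u x + (b + 1 : ℝ≥0) := by
    rw [ENNReal.coe_add, ENNReal.coe_one, ← add_assoc]
    exact le_add_self
  calc ‖f x‖ₑ ≤ M * (u x - kernelOp P u x + b) ^ (1 / p) := hf.2 x
    _ ≤ M * (u x + (b + 1 : ℝ≥0)) ^ (1 / p) := by gcongr
    _ ≤ M * (u x + (b + 1 : ℝ≥0)) ^ (1 / q) := by gcongr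

lemma measurable_piLE_apply {X : Type*} [MeasurableSpace X] (n : ℕ) :
    Measurable[Filtration.piLE (X := fun _ : ℕ => X) n] fun ω : ℕ → X => ω n :=
  (measurable_pi_apply (⟨n, le_refl n⟩ : Set.Iic n)).comp
    (comap_measurable (Preorder.restrictLe (π := fun _ : ℕ => X) n))

namespace IsCanonicalChain

variable {X : Type*} [MeasurableSpace X] {P : Kernel X X} {x : X} {μ : Measure (ℕ → X)}
  {u g : X → ℝ≥0∞} {a b : ℝ≥0}

lemma lintegral_mul_apply_succ (hμ : IsCanonicalChain P x μ) (hg : Measurable g) (n : ℕ)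
    {h : (ℕ → X) → ℝ≥0∞} (hh : Measurable[Filtration.piLE (X := fun _ : ℕ => X) n] h) :
    ∫⁻ ω, h ω * g (ω (n + 1)) ∂μ = ∫⁻ ω, h ω * kernelOp P g (ω n) ∂μ := by
  refine hμ.2.2 n g hg h (hh.mono ?_ le_rfl)
  have restrict_eq : Preorder.restrictLe (π := fun _ : ℕ => X) n =
      (fun v i => v ⟨i, Nat.lt_succ_of_le i.2⟩) ∘ fun ω (i : Fin (n + 1)) => ω i := rfl
  change MeasurableSpace.comap (Preorder.restrictLe n) MeasurableSpace.pi ≤ _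
  rw [restrict_eq, ← MeasurableSpace.comap_comp]
  exact MeasurableSpace.comap_mono (by fun_prop : Measurable _).comap_le

lemma lintegral_apply_succ (hμ : IsCanonicalChain P x μ) (hg : Measurable g) (n : ℕ) :
    ∫⁻ ω, g (ω (n + 1)) ∂μ = ∫⁻ ω, kernelOp P g (ω n) ∂μ := by
  simpa using hμ.lintegral_mul_apply_succ hg n (h := 1) measurable_const

lemma lintegral_apply_zero (hμ : IsCanonicalChain P x μ) (hg : Measurable g) :
    ∫⁻ ω, g (ω 0) ∂μ = g x := by
  rw [← lintegral_dirac' x hg, ← hμ.2.1, lintegral_map hg (measurable_pi_apply 0)]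

lemma lintegral_apply_le_of_drift (hμ : IsCanonicalChain P x μ) (hu : Measurable u) (ha : a < 1)
    (hdrift : ∀ y, kernelOp P u y ≤ a * u y + b) (n : ℕ) :
    ∫⁻ ω, u (ω n) ∂μ ≤ u x + (b / (1 - a) : ℝ≥0) := by
  have := hμ.1
  set t : ℝ≥0 := b / (1 - a)
  have ht : a * t + b = t := by
    have hb : (1 - a) * t = b := mul_div_cancel₀ b (tsub_pos_of_lt ha).ne'
    rw [← hb, ← add_mul, add_tsub_cancel_of_le ha.le, one_mul]
  induction n with
  | zero => exact (hμ.lintegral_apply_zero hu).trans_le le_self_add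
  | succ n ih =>
    calc ∫⁻ ω, u (ω (n + 1)) ∂μ = ∫⁻ ω, kernelOp P u (ω n) ∂μ := hμ.lintegral_apply_succ hu n
      _ ≤ ∫⁻ ω, (a * u (ω n) + b) ∂μ := lintegral_mono fun ω => hdrift _
      _ = a * ∫⁻ ω, u (ω n) ∂μ + b := by
          rw [lintegral_add_right _ measurable_const, lintegral_const_mul' _ _ ENNReal.coe_ne_top]
          simp
      _ ≤ a * (u x + t) + b := by gcongr
      _ = a * u x + t := by
          rw [mul_add, add_assoc]
          exact_mod_cast congrArg (a * u x + ·) (congrArg ENNReal.ofNNReal ht)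
      _ ≤ u x + t := by
          gcongr
          exact mul_le_of_le_one_left' (by exact_mod_cast ha.le)

lemma ae_eventually_sum_le [IsMarkovKernel P] (hμ : IsCanonicalChain P x μ) (hu : Measurable u)
    {K : ℝ≥0∞} (hK : K ≠ ∞) (huK : ∀ n, ∫⁻ ω, u (ω n) ∂μ ≤ K) {q : ℝ} (hq : 1 < q) (hq2 : q ≤ 2) :
    ∀ᵐ ω ∂μ, ∀ᶠ j : ℕ in atTop,
      ∑ k ∈ Finset.range (2 ^ j), u (ω (k + 1)) ^ (1 / q) ≤
        2 ^ j + ∑ k ∈ Finset.range (2 ^ j), kernelOp P (fun y => u y ^ (1 / q)) (ω k) := by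
  have hq0 : 0 < q := by linarith
  set g : X → ℝ≥0∞ := fun y => u y ^ (1 / q)
  have hg : Measurable g := hu.pow_const _
  let z : ℕ → (ℕ → X) → ℝ≥0∞ := fun k ω => g (ω (k + 1))
  let c : ℕ → (ℕ → X) → ℝ≥0∞ := fun k ω => kernelOp P g (ω k)
  let ℱ := Filtration.piLE (X := fun _ : ℕ => X)
  have hz : ∀ k, Measurable[ℱ (k + 1)] (z k) := fun k => hg.comp (measurable_piLE_apply (k + 1))
  have hc : ∀ k, Measurable[ℱ k] (c k) := fun k =>
    (measurable_kernelOp hg).comp (measurable_piLE_apply k)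
  have hzK : ∀ k, ∫⁻ ω, z k ω ^ q ∂μ ≤ K := fun k => by
    simpa [z, g, ← ENNReal.rpow_mul, inv_mul_cancel₀ hq0.ne'] using huK (k + 1)
  have hcK : ∀ k, ∫⁻ ω, c k ω ^ q ∂μ ≤ K := fun k => by
    calc ∫⁻ ω, c k ω ^ q ∂μ ≤ ∫⁻ ω, kernelOp P u (ω k) ∂μ := lintegral_mono fun ω => by
          refine (ENNReal.le_rpow_inv_iff hq0).1 ?_
          rw [← one_div]
          exact kernelOp_rpow_le hu (by positivity) ((div_le_one hq0).2 hq.le) _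
      _ = ∫⁻ ω, u (ω (k + 1)) ∂μ := (hμ.lintegral_apply_succ hu k).symm
      _ ≤ K := huK (k + 1)
  have hY := lintegral_reflectedSum_rpow_le hq hq2 hz hc
    (fun k h hh => (hμ.lintegral_mul_apply_succ hg k hh).le) hzK hcK
  have hYm : ∀ n, Measurable (reflectedSum z c n) := fun n =>
    (measurable_reflectedSum hz hc n).mono (ℱ.le n) le_rfl
  have hC : ENNReal.ofReal q * (K + K) ≠ ∞ :=
    ENNReal.mul_ne_top ENNReal.ofReal_ne_top (ENNReal.add_ne_top.2 ⟨hK, hK⟩)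
  filter_upwards [ae_eventually_le_two_pow (fun n => (hYm n).aemeasurable) hq hC hY] with ω hω
  filter_upwards [hω] with j hj
  exact (sum_le_reflectedSum_add_sum z c (2 ^ j) ω).trans (by gcongr)

lemma exists_ae_eventually_sum_rpow_le [IsMarkovKernel P] (hμ : IsCanonicalChain P x μ)
    (hu : Measurable u) (ha : a < 1) (hdrift : ∀ y, kernelOp P u y ≤ a * u y + b) (hx : u x ≠ ∞)
    {q : ℝ} (hq : 1 < q) (hq2 : q ≤ 2) :
    ∃ L : ℝ≥0, ∀ᵐ ω ∂μ, ∀ᶠ n : ℕ in atTop,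
      ∑ k ∈ Finset.range n, u (ω k) ^ (1 / q) ≤ L * n := by
  have hq0 : 0 < q := by linarith
  have hr0 : 0 < 1 / q := by positivity
  have hr1 : 1 / q ≤ 1 := (div_le_one hq0).2 hq.le
  set K : ℝ≥0∞ := u x + (b / (1 - a) : ℝ≥0)
  have hK : K ≠ ∞ := ENNReal.add_ne_top.2 ⟨hx, ENNReal.coe_ne_top⟩
  have huK : ∀ n, ∫⁻ ω, u (ω n) ∂μ ≤ K := hμ.lintegral_apply_le_of_drift hu ha hdrift
  have hfin : ∀ᵐ ω ∂μ, ∀ k, u (ω k) < ∞ := ae_all_iff.2 fun k =>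
    ae_lt_top (hu.comp (measurable_pi_apply k)) ((huK k).trans_lt hK.lt_top).ne
  refine ⟨(2 + b ^ (1 / q)) / (1 - a ^ (1 / q)) * 2, ?_⟩
  filter_upwards [hfin, hμ.ae_eventually_sum_le hu hK huK hq hq2] with ω hω hsum
  have hrfin : ∀ k, u (ω k) ^ (1 / q) < ∞ := fun k =>
    ENNReal.rpow_lt_top_of_nonneg hr0.le (hω k).ne
  have htwo : Tendsto (fun j : ℕ => ((2 ^ j : ℕ) : ℝ≥0∞)) atTop (nhds ∞) :=
    ENNReal.tendsto_nat_nhds_top.comp (tendsto_pow_atTop_atTop_of_one_lt one_lt_two)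
  rw [ENNReal.coe_mul]
  refine eventually_le_mul_natCast_of_two_pow
    (fun m n hmn => Finset.sum_le_sum_of_subset (Finset.range_mono hmn)) ?_
  filter_upwards [hsum, htwo.eventually_const_le (hrfin 0)] with j hj h0
  refine sum_range_le_of_drift (fun k => (hrfin k).ne) (NNReal.rpow_lt_one ha hr0) h0 ?_
  calc ∑ k ∈ Finset.range (2 ^ j), u (ω (k + 1)) ^ (1 / q)
      ≤ 2 ^ j + ∑ k ∈ Finset.range (2 ^ j), kernelOp P (fun y => u y ^ (1 / q)) (ω k) := hj
    _ ≤ (2 ^ j : ℕ) + ∑ k ∈ Finset.range (2 ^ j),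
          ((a ^ (1 / q) : ℝ≥0) * u (ω k) ^ (1 / q) + (b ^ (1 / q) : ℝ≥0)) := by
        push_cast
        gcongr with k
        exact kernelOp_rpow_le_of_drift hu hr0 hr1 (hdrift (ω k))

variable {E : Type*} [NormedAddCommGroup E] {f : X → E} {M : ℝ≥0}

lemma eLpNorm_apply_le (hμ : IsCanonicalChain P x μ) (hu : Measurable u)
    (ha : a < 1) (hdrift : ∀ y, kernelOp P u y ≤ a * u y + b) {p : ℝ} (hp : 0 < p)
    (hfu : ∀ y, ‖f y‖ₑ ≤ M * u y ^ (1 / p)) (n : ℕ) :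
    eLpNorm (fun ω : ℕ → X => f (ω n)) (ENNReal.ofReal p) μ ≤
      M * (u x + (b / (1 - a) : ℝ≥0)) ^ (1 / p) := by
  have hpow : ∀ y, ‖f y‖ₑ ^ p ≤ M ^ p * u y := fun y => by
    calc ‖f y‖ₑ ^ p ≤ (M * u y ^ (1 / p)) ^ p := ENNReal.rpow_le_rpow (hfu y) hp.le
      _ = M ^ p * u y := by
          rw [ENNReal.mul_rpow_of_nonneg _ _ hp.le, ← ENNReal.rpow_mul,
            one_div_mul_cancel hp.ne', ENNReal.rpow_one]
  rw [eLpNorm_eq_lintegral_rpow_enorm_toReal (ENNReal.ofReal_pos.2 hp).ne' ENNReal.ofReal_ne_top,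
    ENNReal.toReal_ofReal hp.le]
  calc (∫⁻ ω, ‖f (ω n)‖ₑ ^ p ∂μ) ^ (1 / p) ≤ (∫⁻ ω, M ^ p * u (ω n) ∂μ) ^ (1 / p) := by
        gcongr with ω
        exact hpow (ω n)
    _ = (M ^ p * ∫⁻ ω, u (ω n) ∂μ) ^ (1 / p) := by
        rw [lintegral_const_mul' _ _ (ENNReal.rpow_ne_top_of_nonneg hp.le ENNReal.coe_ne_top)]
    _ ≤ (M ^ p * (u x + (b / (1 - a) : ℝ≥0))) ^ (1 / p) := by
        gcongr
        exact hμ.lintegral_apply_le_of_drift hu ha hdrift n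
    _ = M * (u x + (b / (1 - a) : ℝ≥0)) ^ (1 / p) := by
        rw [ENNReal.mul_rpow_of_nonneg _ _ (by positivity), ← ENNReal.rpow_mul,
          mul_one_div_cancel hp.ne', ENNReal.rpow_one]

variable [NormedSpace ℝ E] {ψ : ℕ → ℝ}

lemma ae_tendsto_weighted_average_apply_zero [IsMarkovKernel P] (hμ : IsCanonicalChain P x μ)
    (hu : Measurable u) (ha : a < 1) (hdrift : ∀ y, kernelOp P u y ≤ a * u y + b) (hx : u x ≠ ∞)
    {q : ℝ} (hq : 1 < q) (hq2 : q ≤ 2) (hfu : ∀ y, ‖f y‖ₑ ≤ M * u y ^ (1 / q))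
    (hψ : Tendsto ψ atTop (nhds 0)) :
    ∀ᵐ ω ∂μ, Tendsto (fun n : ℕ => (n : ℝ)⁻¹ • ∑ k ∈ Finset.range n, ψ k • f (ω k))
      atTop (nhds 0) := by
  obtain ⟨L, hL⟩ := hμ.exists_ae_eventually_sum_rpow_le hu ha hdrift hx hq hq2
  filter_upwards [hL] with ω hω
  refine tendsto_weighted_average_zero hψ (L := M * L) ?_
  filter_upwards [hω] with n hn
  calc ∑ k ∈ Finset.range n, ‖f (ω k)‖ₑ ≤ ∑ k ∈ Finset.range n, M * u (ω k) ^ (1 / q) :=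
        Finset.sum_le_sum fun k _ => hfu (ω k)
    _ = M * ∑ k ∈ Finset.range n, u (ω k) ^ (1 / q) := (Finset.mul_sum ..).symm
    _ ≤ M * (L * n) := by gcongr
    _ = (M * L : ℝ≥0) * n := by rw [ENNReal.coe_mul, mul_assoc]

lemma tendsto_eLpNorm_weighted_average_apply_zero (hμ : IsCanonicalChain P x μ) (hu : Measurable u)
    (ha : a < 1) (hdrift : ∀ y, kernelOp P u y ≤ a * u y + b) (hx : u x ≠ ∞) {p : ℝ} (hp : 1 ≤ p)
    (hf : StronglyMeasurable f) (hfu : ∀ y, ‖f y‖ₑ ≤ M * u y ^ (1 / p))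
    (hψ : Tendsto ψ atTop (nhds 0)) :
    Tendsto (fun n : ℕ => eLpNorm
      (fun ω : ℕ → X => (n : ℝ)⁻¹ • ∑ k ∈ Finset.range n, ψ k • f (ω k))
      (ENNReal.ofReal p) μ) atTop (nhds 0) := by
  have hp0 : 0 < p := by linarith
  have hK : u x + (b / (1 - a) : ℝ≥0) ≠ ∞ := ENNReal.add_ne_top.2 ⟨hx, ENNReal.coe_ne_top⟩
  exact tendsto_eLpNorm_weighted_average_zero hψ (ENNReal.one_le_ofReal.2 hp)
    (fun k => (hf.comp_measurable (measurable_pi_apply k)).aestronglyMeasurable)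
    (ENNReal.mul_ne_top ENNReal.coe_ne_top
      (ENNReal.rpow_lt_top_of_nonneg (by positivity) hK).ne)
    (hμ.eLpNorm_apply_le hu ha hdrift hp0 hfu)

end IsCanonicalChain

theorem stmt7_general {X : Type*} [MeasurableSpace X] (P : Kernel X X) [IsMarkovKernel P]
    (u : X → ℝ≥0∞) (hmeas : Measurable u) (a : ℝ≥0) (ha : a < 1) (b : ℝ≥0)
    (hdrift : ∀ x, kernelOp P u x ≤ a * u x + b) (p : ℝ) (hp : 1 < p)
    (ψ : ℕ → ℝ) (hψ : Tendsto ψ atTop (nhds 0))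
    (f : X → ℝ) (M : ℝ≥0) (hf : MemDriftSpace P u b p f M)
    (x : X) (hx : u x < ∞) (μ : Measure (ℕ → X)) (hμ : IsCanonicalChain P x μ) :
    (∀ᵐ ω ∂μ, Tendsto
      (fun n : ℕ => (n : ℝ)⁻¹ * ∑ k ∈ Finset.range n, ψ k * f (ω k))
      atTop (nhds 0)) ∧
    Tendsto (fun n : ℕ => eLpNorm
      (fun ω => (n : ℝ)⁻¹ * ∑ k ∈ Finset.range n, ψ k * f (ω k))
      (ENNReal.ofReal p) μ) atTop (nhds 0) := by
  have hp0 : 0 < p := by linarith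
  have hq : 1 < min p 2 := lt_min hp one_lt_two
  have hwmeas : Measurable fun y => u y + (b + 1 : ℝ≥0) := hmeas.add_const _
  have hwdrift := fun y => kernelOp_add_const_le (hdrift y) (b + 1)
  have hwx : u x + (b + 1 : ℝ≥0) ≠ ∞ := ENNReal.add_ne_top.2 ⟨hx.ne, ENNReal.coe_ne_top⟩
  exact ⟨hμ.ae_tendsto_weighted_average_apply_zero hwmeas ha hwdrift hwx hq (min_le_right p 2)
      (hf.enorm_le (by linarith) (min_le_left p 2)) hψ,
    hμ.tendsto_eLpNorm_weighted_average_apply_zero hwmeas ha hwdrift hwx hp.le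
      hf.1.stronglyMeasurable (hf.enorm_le hp0 le_rfl) hψ⟩

/-- Let `u : X → [1,∞]` be Borel with `Pu ≤ a·u + b`, `a ∈ (0,1)`, `b ∈ ℝ₊`,
let `p ∈ (1,∞)`, let `ψ : ℕ → ℝ₊` be nonincreasing with `ψ → 0`, and let `f ∈ E_u^p`. Then for
every `x` with `u(x) < ∞`, `(1/n) ∑_{k=0}^{n−1} ψ(k) f(X_k) → 0`, `ℙ_x`-a.e. and in `L^p(ℙ_x)`. -/
theorem stmt7 {X : Type*} [MeasurableSpace X] [StandardBorelSpace X]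
    (P : ProbabilityTheory.Kernel X X) [IsMarkovKernel P]
    (u : X → ℝ≥0∞) (hmeas : Measurable u) (hone : ∀ x, 1 ≤ u x)
    (a : ℝ) (ha0 : 0 < a) (ha1 : a < 1) (b : ℝ≥0)
    (hdrift : ∀ x, kernelOp P u x ≤ ENNReal.ofReal a * u x + (b : ℝ≥0∞))
    (p : ℝ) (hp : 1 < p)
    (ψ : ℕ → ℝ) (hψ0 : ∀ n, 0 ≤ ψ n) (hψmono : Antitone ψ)
    (hψlim : Tendsto ψ atTop (nhds 0))
    (f : X → ℝ) (M : ℝ≥0) (hf : MemDriftSpace P u b p f M)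
    (x : X) (hx : u x < ∞)
    (μ : Measure (ℕ → X)) (hμ : IsCanonicalChain P x μ) :
    (∀ᵐ ω ∂μ, Tendsto
      (fun n : ℕ => (n : ℝ)⁻¹ * ∑ k ∈ Finset.range n, ψ k * f (ω k))
      atTop (nhds 0)) ∧
    Tendsto (fun n : ℕ => eLpNorm
      (fun ω => (n : ℝ)⁻¹ * ∑ k ∈ Finset.range n, ψ k * f (ω k))
      (ENNReal.ofReal p) μ) atTop (nhds 0) :=
  stmt7_general P u hmeas a.toNNReal (Real.toNNReal_lt_one.2 ha1) b hdrift p hp ψ hψlim f M hf x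
    hx μ hμ
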